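/- arXiv:0808.4125 — 3 statements merged into one kernel-verified Lean document; each statement's English description precedes it below -/
import Mathlib

section
/- Let g be a finite-dimensional real Lie algebra, π a Poisson bivector on g, and ω a 2-form on g. Set N := π ∘ ω♭, ω_N(x,y) := ω(Nx,y), H := −dω, and 𝓗(x,y,z) := H(Nx,Ny,z) + H(Ny,Nz,x) + H(Nz,Nx,y). Then the following equality of 3-forms holds: 2( i_N(dω_N) + 𝓗 ) = d( i_N ω_N ), where for a 3-form η, (i_N η)(x,y,z) = η(Nx,y,z) + η(x,Ny,z) + η(x,y,Nz), and for a 2-form τ, (i_N τ)(x,y) = τ(Nx,y) + τ(x,Ny). -/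
namespace PqN

variable {g : Type*} [LieRing g] [LieAlgebra ℝ g]

noncomputable def adStar (x : g) (α : Module.Dual ℝ g) : Module.Dual ℝ g :=
  -(α ∘ₗ (LieAlgebra.ad ℝ g x : g →ₗ[ℝ] g))

noncomputable def brPi (π : Module.Dual ℝ g →ₗ[ℝ] g) (α β : Module.Dual ℝ g) :
    Module.Dual ℝ g :=
  adStar (π α) β - adStar (π β) α

def brN (N : g →ₗ[ℝ] g) (x y : g) : g := ⁅N x, y⁆ + ⁅x, N y⁆ - N ⁅x, y⁆

def torN (N : g →ₗ[ℝ] g) (x y : g) : g := ⁅N x, N y⁆ - N (brN N x y)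

noncomputable def brNmap (N : g →ₗ[ℝ] g) (x : g) : g →ₗ[ℝ] g :=
  (LieAlgebra.ad ℝ g (N x) : g →ₗ[ℝ] g) + (LieAlgebra.ad ℝ g x : g →ₗ[ℝ] g) ∘ₗ N
    - N ∘ₗ (LieAlgebra.ad ℝ g x : g →ₗ[ℝ] g)

noncomputable def brNPi (π : Module.Dual ℝ g →ₗ[ℝ] g) (N : g →ₗ[ℝ] g)
    (α β : Module.Dual ℝ g) : Module.Dual ℝ g :=
  -(β ∘ₗ brNmap N (π α)) + α ∘ₗ brNmap N (π β)

noncomputable def conc (π : Module.Dual ℝ g →ₗ[ℝ] g) (N : g →ₗ[ℝ] g)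
    (α β : Module.Dual ℝ g) : Module.Dual ℝ g :=
  brNPi π N α β - brPi π (N.dualMap α) β - brPi π α (N.dualMap β) + N.dualMap (brPi π α β)

def lie (x y : g) : g := ⁅x, y⁆

def dTwo (br : g → g → g) (ω : g → g → ℝ) (x y z : g) : ℝ :=
  -ω (br x y) z + ω (br x z) y - ω (br y z) x

def dThree (br : g → g → g) (φ : g → g → g → ℝ) (x₀ x₁ x₂ x₃ : g) : ℝ :=
  -φ (br x₀ x₁) x₂ x₃ + φ (br x₀ x₂) x₁ x₃ - φ (br x₀ x₃) x₁ x₂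
    - φ (br x₁ x₂) x₀ x₃ + φ (br x₁ x₃) x₀ x₂ - φ (br x₂ x₃) x₀ x₁

def calH (N : g →ₗ[ℝ] g) (H : g → g → g → ℝ) (x y z : g) : ℝ :=
  H (N x) (N y) z + H (N y) (N z) x + H (N z) (N x) y

def iN2 (N : g →ₗ[ℝ] g) (τ : g → g → ℝ) (x y : g) : ℝ := τ (N x) y + τ x (N y)

def iN3 (N : g →ₗ[ℝ] g) (η : g → g → g → ℝ) (x y z : g) : ℝ :=
  η (N x) y z + η x (N y) z + η x y (N z)

structure IsAlt3 (H : g → g → g → ℝ) : Prop where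
  lin1 : ∀ y z, IsLinearMap ℝ fun x => H x y z
  lin2 : ∀ x z, IsLinearMap ℝ fun y => H x y z
  lin3 : ∀ x y, IsLinearMap ℝ fun z => H x y z
  alt12 : ∀ x y z, H x y z = -H y x z
  alt23 : ∀ x y z, H x y z = -H x z y

noncomputable def dual3 (H : g → g → g → ℝ) (hH : IsAlt3 H) (x y : g) :
    Module.Dual ℝ g :=
  IsLinearMap.mk' (fun z => H x y z) (hH.lin3 x y)

structure IsPQNwB (π : Module.Dual ℝ g →ₗ[ℝ] g) (N : g →ₗ[ℝ] g)
    (ψ H : g → g → g → ℝ) : Prop where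
  skew : ∀ α β : Module.Dual ℝ g, α (π β) = -β (π α)
  poisson : ∀ α β γ : Module.Dual ℝ g,
    α ⁅π β, π γ⁆ + β ⁅π γ, π α⁆ + γ ⁅π α, π β⁆ = 0
  compat : N ∘ₗ π = π ∘ₗ N.dualMap
  alt_psi : IsAlt3 ψ
  alt_H : IsAlt3 H
  closed_psi : ∀ x y z w, dThree lie ψ x y z w = 0
  closed_H : ∀ x y z w, dThree lie H x y z w = 0
  conc_eq : ∀ α β z, conc π N α β z = 2 * H (π α) (π β) z
  torsion : ∀ x y, torN N x y =
    π (dual3 H alt_H (N x) y - dual3 H alt_H (N y) x + dual3 ψ alt_psi x y)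
  dN_psi : ∀ x y z w, dThree (brN N) ψ x y z w = dThree lie (calH N H) x y z w

def pr (u v : g × Module.Dual ℝ g) : ℝ := u.2 v.1 + v.2 u.1

noncomputable def dorf (H : g → g → g → ℝ) (hH : IsAlt3 H)
    (u v : g × Module.Dual ℝ g) : g × Module.Dual ℝ g :=
  (⁅u.1, v.1⁆, adStar u.1 v.2 - adStar v.1 u.2 + dual3 H hH u.1 v.1)

noncomputable def torJ (H : g → g → g → ℝ) (hH : IsAlt3 H)
    (J : g × Module.Dual ℝ g → g × Module.Dual ℝ g) (u v : g × Module.Dual ℝ g) :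
    g × Module.Dual ℝ g :=
  dorf H hH (J u) (J v) - J (dorf H hH (J u) v + dorf H hH u (J v) - J (dorf H hH u v))

noncomputable def dTwoDual (τ : g →ₗ[ℝ] Module.Dual ℝ g) (x y : g) : Module.Dual ℝ g :=
  -(τ ⁅x, y⁆) + (LinearMap.applyₗ y) ∘ₗ (τ ∘ₗ (LieAlgebra.ad ℝ g x : g →ₗ[ℝ] g))
    - (LinearMap.applyₗ x) ∘ₗ (τ ∘ₗ (LieAlgebra.ad ℝ g y : g →ₗ[ℝ] g))

end PqN

/-!
Skewness of `π` and `ω` makes `N = π ∘ ω♭` self-adjoint for `ω`, so `i_N ω_N = 2 ω(N²·, ·)`. For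
any `ω`-self-adjoint `N`, the difference between `i_N(dω_N) + 𝓗` and `d(ω(N²·, ·))` is the cyclic
sum of `ω(⁅Nx, Ny⁆, z)`. For `N = π ∘ ω♭` this sum is, up to sign, the Poisson identity for `π`
evaluated on `ω♭ x`, `ω♭ y`, `ω♭ z`.
-/

namespace PqN

section Bivector

variable {R : Type*} [CommRing R]

theorem isSelfAdjoint_comp_of_skew {M : Type*} [AddCommGroup M] [Module R M]
    {π : Module.Dual R M →ₗ[R] M} {ω : M →ₗ[R] Module.Dual R M}
    (hπ : ∀ α β : Module.Dual R M, α (π β) = -β (π α)) (hω : ∀ x y, ω x y = -ω y x) :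
    LinearMap.IsSelfAdjoint ω (π ∘ₗ ω) := fun x y =>
  calc
    ω (π (ω x)) y = -ω y (π (ω x)) := hω _ _
    _ = ω x (π (ω y)) := by rw [hπ (ω y), neg_neg]

theorem cyclic_sum_lie_comp_eq_zero_of_poisson {L : Type*} [LieRing L] [LieAlgebra R L]
    {π : Module.Dual R L →ₗ[R] L} {ω : L →ₗ[R] Module.Dual R L}
    (hπP : ∀ α β γ : Module.Dual R L,
      α ⁅π β, π γ⁆ + β ⁅π γ, π α⁆ + γ ⁅π α, π β⁆ = 0)
    (hω : ∀ x y, ω x y = -ω y x) (x y z : L) :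
    ω ⁅π (ω x), π (ω y)⁆ z + ω ⁅π (ω y), π (ω z)⁆ x + ω ⁅π (ω z), π (ω x)⁆ y = 0 := by
  rw [hω _ z, hω _ x, hω _ y]
  linear_combination -hπP (ω x) (ω y) (ω z)

end Bivector

theorem dTwo_const_mul {X : Type*} (br : X → X → X) (c : ℝ) (τ : X → X → ℝ)
    (x y z : X) :
    dTwo br (fun a b => c * τ a b) x y z = c * dTwo br τ x y z := by
  simp only [dTwo]
  ring

variable {g : Type*} [LieRing g] [LieAlgebra ℝ g]

theorem dTwo_lie_eq_neg_cyclic_sum (τ : g →ₗ[ℝ] Module.Dual ℝ g) (x y z : g) :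
    dTwo lie (fun a b => τ a b) x y z = -(τ ⁅x, y⁆ z + τ ⁅y, z⁆ x + τ ⁅z, x⁆ y) := by
  have τ_lie_skew : τ ⁅x, z⁆ y = -τ ⁅z, x⁆ y := by
    rw [← lie_skew x z, map_neg, LinearMap.neg_apply]
  simp only [dTwo, lie, τ_lie_skew]
  ring

variable {ω : g →ₗ[ℝ] Module.Dual ℝ g} {N : g →ₗ[ℝ] g}

theorem iN2_comp_eq_two_mul (hN : LinearMap.IsSelfAdjoint ω N) :
    iN2 N (fun a b => ω (N a) b) = fun a b => 2 * ω (N (N a)) b := by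
  funext a b
  rw [iN2, ← hN (N a) b, two_mul]

/- In `𝓗 = Σ H(Nx, Ny, z)`, the terms of `H = -dω` whose bracket involves only one `N` cancel
against `i_N dω_N`; only the terms with bracket `⁅Nx, Ny⁆` survive. -/
theorem iN3_dTwo_add_calH (hN : LinearMap.IsSelfAdjoint ω N) (x y z : g) :
    iN3 N (fun a b c => dTwo lie (fun p q => ω (N p) q) a b c) x y z
        + calH N (fun a b c => -dTwo lie (fun p q => ω p q) a b c) x y z
      = dTwo lie (fun a b => ω (N (N a)) b) x y z
        + (ω ⁅N x, N y⁆ z + ω ⁅N y, N z⁆ x + ω ⁅N z, N x⁆ y) := by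
  have d_ω := dTwo_lie_eq_neg_cyclic_sum ω
  have d_ωN := dTwo_lie_eq_neg_cyclic_sum (ω ∘ₗ N)
  have d_ωNN := dTwo_lie_eq_neg_cyclic_sum (ω ∘ₗ N ∘ₗ N)
  have adjoint (a b : g) : ω (N a) b = ω a (N b) := hN a b
  simp only [LinearMap.comp_apply, adjoint] at d_ωN d_ωNN
  simp only [iN3, calH, adjoint, d_ω, d_ωN, d_ωNN]
  ring

end PqN

open PqN in
theorem pair_iN_identity_general
    {g : Type*} [LieRing g] [LieAlgebra ℝ g]
    {ω : g →ₗ[ℝ] Module.Dual ℝ g} {N : g →ₗ[ℝ] g} (hN : LinearMap.IsSelfAdjoint ω N)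
    {x y z : g} (hcyc : ω ⁅N x, N y⁆ z + ω ⁅N y, N z⁆ x + ω ⁅N z, N x⁆ y = 0) :
    2 * (iN3 N (fun a b c => dTwo lie (fun p q => ω (N p) q) a b c) x y z
          + calH N (fun a b c => -dTwo lie (fun p q => ω p q) a b c) x y z)
      = dTwo lie (iN2 N (fun a b => ω (N a) b)) x y z := by
  rw [iN3_dTwo_add_calH hN, hcyc, add_zero, iN2_comp_eq_two_mul hN, dTwo_const_mul]

open PqN in
/-- For a Poisson bivector `π` and a 2-form `ω`, with
`N := π∘ω♭`, `ω_N(x,y) := ω(Nx,y)`, `H := −dω`,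
`𝓗(x,y,z) = H(Nx,Ny,z) + H(Ny,Nz,x) + H(Nz,Nx,y)`:
`2(i_N(dω_N) + 𝓗) = d(i_N ω_N)` as 3-forms. -/
theorem pair_iN_identity
    {g : Type*} [LieRing g] [LieAlgebra ℝ g] [FiniteDimensional ℝ g]
    (π : Module.Dual ℝ g →ₗ[ℝ] g)
    (hπ : ∀ α β : Module.Dual ℝ g, α (π β) = -β (π α))
    (hπP : ∀ α β γ : Module.Dual ℝ g,
      α ⁅π β, π γ⁆ + β ⁅π γ, π α⁆ + γ ⁅π α, π β⁆ = 0)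
    (ω : g →ₗ[ℝ] Module.Dual ℝ g) (hω : ∀ x y : g, ω x y = -ω y x)
    (N : g →ₗ[ℝ] g) (hN : N = π ∘ₗ ω) :
    ∀ x y z : g,
      2 * (iN3 N (fun a b c => dTwo lie (fun p q => ω (N p) q) a b c) x y z
            + calH N (fun a b c => -dTwo lie (fun p q => ω p q) a b c) x y z)
        = dTwo lie (iN2 N (fun a b => ω (N a) b)) x y z := by
  subst hN
  exact fun x y z => pair_iN_identity_general (isSelfAdjoint_comp_of_skew hπ hω)
    (cyclic_sum_lie_comp_eq_zero_of_poisson hπP hω x y z)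
end

section
/- Let g be a finite-dimensional real Lie algebra, π a Poisson bivector on g, and ω a 2-form on g with dω = 0. Set N := π ∘ ω♭ and ω_N(x,y) := ω(Nx,y), and assume dω_N = 0. Then (π, N) is a Poisson–Nijenhuis structure on g: N ∘ π = π ∘ tN, the Nijenhuis torsion T_N vanishes identically, and the concomitant C_{π,N} vanishes identically. -/
/-!
Skew-symmetry of `π` and `ω` gives `ᵗN = ω♭ ∘ π` for `N = π ∘ ω♭`, so both `N ∘ π` and `π ∘ ᵗN` are
`π ∘ ω♭ ∘ π`. Being Poisson means that `π` carries `[·,·]_π` to the bracket of `g`; hence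
`[Nx, Ny] = π [ω♭x, ω♭y]_π`, and writing `N = π ∘ ω♭` in the other terms of the torsion as well
exhibits `T_N(x, y)` as the image under `π` of `dω(Nx, y, ·) + dω(x, Ny, ·) - dω_N(x, y, ·)`.
The same substitutions turn the concomitant into `C_{π,N}(α, β) = -2 dω(πα, πβ, ·)`.
-/

namespace PqN

section Skew

variable {R M : Type*} [CommRing R] [AddCommMonoid M] [Module R M]
  {π : Module.Dual R M →ₗ[R] M} {ω : M →ₗ[R] Module.Dual R M}

theorem dualMap_comp_of_skew (hπ : ∀ α β : Module.Dual R M, α (π β) = -β (π α))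
    (hω : ∀ x y : M, ω x y = -ω y x) : (π ∘ₗ ω).dualMap = ω ∘ₗ π := by
  ext α x
  calc α (π (ω x)) = -ω x (π α) := hπ α (ω x)
    _ = ω (π α) x := (hω (π α) x).symm

theorem apply_comp_left_eq_right_of_skew (hπ : ∀ α β : Module.Dual R M, α (π β) = -β (π α))
    (hω : ∀ x y : M, ω x y = -ω y x) (x y : M) : ω (π (ω x)) y = ω x (π (ω y)) :=
  (LinearMap.congr_fun₂ (dualMap_comp_of_skew hπ hω) (ω x) y).symm

theorem comp_comm_dualMap_of_skew (hπ : ∀ α β : Module.Dual R M, α (π β) = -β (π α))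
    (hω : ∀ x y : M, ω x y = -ω y x) : (π ∘ₗ ω) ∘ₗ π = π ∘ₗ (π ∘ₗ ω).dualMap := by
  rw [dualMap_comp_of_skew hπ hω, LinearMap.comp_assoc]

end Skew

variable {g : Type*} [LieRing g] [LieAlgebra ℝ g]
  {π : Module.Dual ℝ g →ₗ[ℝ] g} {ω : g →ₗ[ℝ] Module.Dual ℝ g} {N : g →ₗ[ℝ] g}

theorem brPi_apply (π : Module.Dual ℝ g →ₗ[ℝ] g) (α β : Module.Dual ℝ g) (z : g) :
    brPi π α β z = α ⁅π β, z⁆ - β ⁅π α, z⁆ := by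
  simp only [brPi, adStar, LinearMap.sub_apply, LinearMap.neg_apply, LinearMap.comp_apply,
    LieAlgebra.ad_apply]
  ring

theorem dTwoDual_apply (τ : g →ₗ[ℝ] Module.Dual ℝ g) (x y z : g) :
    dTwoDual τ x y z = -τ ⁅x, y⁆ z + τ ⁅x, z⁆ y - τ ⁅y, z⁆ x :=
  rfl

theorem dTwoDual_eq_zero {τ : g →ₗ[ℝ] Module.Dual ℝ g}
    (hτ : ∀ x y z : g, dTwo lie (fun a b => τ a b) x y z = 0) (x y : g) : dTwoDual τ x y = 0 :=
  LinearMap.ext (hτ x y)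

theorem map_brPi (hπ : ∀ α β : Module.Dual ℝ g, α (π β) = -β (π α))
    (hπP : ∀ α β γ : Module.Dual ℝ g, α ⁅π β, π γ⁆ + β ⁅π γ, π α⁆ + γ ⁅π α, π β⁆ = 0)
    (α β : Module.Dual ℝ g) : π (brPi π α β) = ⁅π α, π β⁆ := by
  rw [← sub_eq_zero, ← Module.forall_dual_apply_eq_zero_iff ℝ]
  intro γ
  have hswap : β ⁅π γ, π α⁆ = -β ⁅π α, π γ⁆ := by rw [← lie_skew, map_neg]
  rw [map_sub, hπ, brPi_apply]
  linarith [hπP α β γ]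

theorem torN_comp (hπ : ∀ α β : Module.Dual ℝ g, α (π β) = -β (π α))
    (hπP : ∀ α β γ : Module.Dual ℝ g, α ⁅π β, π γ⁆ + β ⁅π γ, π α⁆ + γ ⁅π α, π β⁆ = 0)
    (hω : ∀ x y : g, ω x y = -ω y x) (x y : g) :
    torN (π ∘ₗ ω) x y =
      π (dTwoDual ω (π (ω x)) y + dTwoDual ω x (π (ω y)) - dTwoDual (ω ∘ₗ π ∘ₗ ω) x y) := by
  have hcovector : brPi π (ω x) (ω y) - ω (brN (π ∘ₗ ω) x y) =
      dTwoDual ω (π (ω x)) y + dTwoDual ω x (π (ω y)) - dTwoDual (ω ∘ₗ π ∘ₗ ω) x y := by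
    ext z
    simp only [brN, brPi_apply, dTwoDual_apply, LinearMap.comp_apply, LinearMap.add_apply,
      LinearMap.sub_apply, map_add, map_sub, apply_comp_left_eq_right_of_skew hπ hω]
    linarith [hω x ⁅π (ω y), z⁆, hω y ⁅π (ω x), z⁆]
  rw [← hcovector, map_sub, map_brPi hπ hπP]
  rfl

theorem conc_apply_of_comp_comm_dualMap (hN : N ∘ₗ π = π ∘ₗ N.dualMap) (α β : Module.Dual ℝ g)
    (z : g) :
    conc π N α β z = 2 * (brPi π α β (N z) + β (N ⁅π α, z⁆) - α (N ⁅π β, z⁆)) := by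
  have hNπ (γ : Module.Dual ℝ g) : π (N.dualMap γ) = N (π γ) := (LinearMap.congr_fun hN γ).symm
  simp only [conc, brNPi, brNmap, brPi_apply, hNπ, LinearMap.dualMap_apply, LinearMap.add_apply,
    LinearMap.sub_apply, LinearMap.neg_apply, LinearMap.comp_apply, LieAlgebra.ad_apply, map_add,
    map_sub]
  ring

theorem conc_comp (hπ : ∀ α β : Module.Dual ℝ g, α (π β) = -β (π α))
    (hπP : ∀ α β γ : Module.Dual ℝ g, α ⁅π β, π γ⁆ + β ⁅π γ, π α⁆ + γ ⁅π α, π β⁆ = 0)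
    (hω : ∀ x y : g, ω x y = -ω y x) (α β : Module.Dual ℝ g) :
    conc π (π ∘ₗ ω) α β = (-2 : ℝ) • dTwoDual ω (π α) (π β) := by
  ext z
  have htranspose (γ : Module.Dual ℝ g) (x : g) : γ ((π ∘ₗ ω) x) = ω (π γ) x :=
    LinearMap.congr_fun₂ (dualMap_comp_of_skew hπ hω) γ x
  rw [conc_apply_of_comp_comm_dualMap (comp_comm_dualMap_of_skew hπ hω), htranspose, htranspose,
    htranspose, map_brPi hπ hπP, LinearMap.smul_apply, dTwoDual_apply, smul_eq_mul,
    hω (π α), hω (π β)]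
  ring

end PqN

open PqN in
theorem POmega_gives_poisson_nijenhuis_general
    {g : Type*} [LieRing g] [LieAlgebra ℝ g]
    (π : Module.Dual ℝ g →ₗ[ℝ] g)
    (hπ : ∀ α β : Module.Dual ℝ g, α (π β) = -β (π α))
    (hπP : ∀ α β γ : Module.Dual ℝ g,
      α ⁅π β, π γ⁆ + β ⁅π γ, π α⁆ + γ ⁅π α, π β⁆ = 0)
    (ω : g →ₗ[ℝ] Module.Dual ℝ g) (hω : ∀ x y : g, ω x y = -ω y x)
    (hdω : ∀ x y z : g, dTwo lie (fun a b => ω a b) x y z = 0)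
    (N : g →ₗ[ℝ] g) (hN : N = π ∘ₗ ω)
    (hdωN : ∀ x y z : g, dTwo lie (fun a b => ω (N a) b) x y z = 0) :
    N ∘ₗ π = π ∘ₗ N.dualMap ∧
    (∀ x y : g, torN N x y = 0) ∧
    (∀ α β : Module.Dual ℝ g, conc π N α β = 0) := by
  subst hN
  refine ⟨comp_comm_dualMap_of_skew hπ hω, fun x y => ?_, fun α β => ?_⟩
  · rw [torN_comp hπ hπP hω, dTwoDual_eq_zero hdω, dTwoDual_eq_zero hdω,
      dTwoDual_eq_zero (τ := ω ∘ₗ π ∘ₗ ω) hdωN, add_zero, sub_zero, map_zero]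
  · rw [conc_comp hπ hπP hω, dTwoDual_eq_zero hdω, smul_zero]

open PqN in
/-- (PΩ-structures give Poisson–Nijenhuis structures.)
If `π` is a Poisson bivector, `ω` a closed 2-form, `N := π∘ω♭`, and
`dω_N = 0`, then `(π, N)` is a Poisson–Nijenhuis structure:
`N∘π = π∘ᵗN`, `T_N ≡ 0` and `C_{π,N} ≡ 0`. -/
theorem POmega_gives_poisson_nijenhuis
    {g : Type*} [LieRing g] [LieAlgebra ℝ g] [FiniteDimensional ℝ g]
    (π : Module.Dual ℝ g →ₗ[ℝ] g)
    (hπ : ∀ α β : Module.Dual ℝ g, α (π β) = -β (π α))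
    (hπP : ∀ α β γ : Module.Dual ℝ g,
      α ⁅π β, π γ⁆ + β ⁅π γ, π α⁆ + γ ⁅π α, π β⁆ = 0)
    (ω : g →ₗ[ℝ] Module.Dual ℝ g) (hω : ∀ x y : g, ω x y = -ω y x)
    (hdω : ∀ x y z : g, dTwo lie (fun a b => ω a b) x y z = 0)
    (N : g →ₗ[ℝ] g) (hN : N = π ∘ₗ ω)
    (hdωN : ∀ x y z : g, dTwo lie (fun a b => ω (N a) b) x y z = 0) :
    N ∘ₗ π = π ∘ₗ N.dualMap ∧
    (∀ x y : g, torN N x y = 0) ∧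
    (∀ α β : Module.Dual ℝ g, conc π N α β = 0) :=
  POmega_gives_poisson_nijenhuis_general π hπ hπP ω hω hdω N hN hdωN
end

section
/- Let g be a finite-dimensional real Lie algebra and H a 3-form on g. Define on E := g ⊕ g* the bracket [(x,α),(y,β)]_H := ([x,y], ad*_x β − ad*_y α + H(x,y,·)) and the pairing ⟨(x,α),(y,β)⟩ := α(y) + β(x). Then: (a) [·,·]_H is alternating ([u,u]_H = 0 for all u ∈ E); (b) the pairing is invariant: ⟨[u,v]_H, w⟩ + ⟨v, [u,w]_H⟩ = 0 for all u,v,w ∈ E; and (c) [·,·]_H satisfies the Jacobi identity (so (E, [·,·]_H) is a Lie algebra) if and only if dH = 0. -/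
/-!
The twisted Dorfman bracket on `g ⊕ g*` is an instance of a general construction: a 2-cochain `c` of
a Lie algebra `L` with values in an `L`-module `M` twists the semidirect-product bracket on `L × M`.
The `L`-component of its Jacobiator vanishes because `L` is a Lie algebra, and in the `M`-component
everything not involving `c` cancels because `M` is a module; what remains is the coboundary of `c`.
Here `M = g*` is the coadjoint module and `c` is `(x, y) ↦ H(x, y, ·)`, whose coboundary is `dH`
with its last argument left free. In the invariance identity the coadjoint terms also cancel,
leaving `H(x, y, z) + H(x, z, y)`.
-/

namespace PqN

open LieModule.Cohomology

section TwistedBracket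

variable {R L M : Type*} [CommRing R] [LieRing L] [LieAlgebra R L] [AddCommGroup M] [Module R M]
  [LieRingModule L M]

/-- The bracket of the semidirect product of `L` with the abelian Lie algebra `M`, twisted by a
2-cochain. It is a plain function, since it is a Lie bracket only when the cochain is closed. -/
def twistedBracket (c : twoCochain R L M) (u v : L × M) : L × M :=
  (⁅u.1, v.1⁆, ⁅u.1, v.2⁆ - ⁅v.1, u.2⁆ + c u.1 v.1)

theorem twistedBracket_self (c : twoCochain R L M) (u : L × M) : twistedBracket c u u = 0 := by
  simp [twistedBracket]

variable [LieModule R L M]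

theorem twistedBracket_jacobiator (c : twoCochain R L M) (u v w : L × M) :
    twistedBracket c u (twistedBracket c v w)
      - (twistedBracket c (twistedBracket c u v) w + twistedBracket c v (twistedBracket c u w))
      = (0, d₂₃ R L M c u.1 v.1 w.1) := by
  refine Prod.ext ?_ ?_
  · simp [twistedBracket]
  · simp only [twistedBracket, Prod.snd_sub, Prod.snd_add, d₂₃_apply, lie_add, lie_sub, lie_lie,
      ← twoCochain_skew c ⁅v.1, w.1⁆ u.1, ← twoCochain_skew c ⁅u.1, w.1⁆ v.1]
    abel

theorem twistedBracket_jacobi_iff_mem_twoCocycle (c : twoCochain R L M) :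
    (∀ u v w, twistedBracket c u (twistedBracket c v w)
      = twistedBracket c (twistedBracket c u v) w + twistedBracket c v (twistedBracket c u w)) ↔
    c ∈ twoCocycle R L M := by
  simp only [← sub_eq_zero (b := _ + _), twistedBracket_jacobiator, mem_twoCocycle_iff,
    LinearMap.ext_iff, LinearMap.zero_apply, Prod.mk_eq_zero, true_and, Prod.forall, forall_const]

end TwistedBracket

section Coadjoint

variable {g : Type*} [LieRing g] [LieAlgebra ℝ g]

theorem adStar_eq_lie (x : g) (α : Module.Dual ℝ g) : adStar x α = ⁅x, α⁆ :=
  rfl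

theorem pr_twistedBracket_add_pr_twistedBracket (c : twoCochain ℝ g (Module.Dual ℝ g))
    (u v w : g × Module.Dual ℝ g) :
    pr (twistedBracket c u v) w + pr v (twistedBracket c u w)
      = c u.1 v.1 w.1 + c u.1 w.1 v.1 := by
  have hskew : u.2 ⁅w.1, v.1⁆ = -u.2 ⁅v.1, w.1⁆ := by rw [← lie_skew, map_neg]
  simp only [pr, twistedBracket, LinearMap.add_apply, LinearMap.sub_apply, Module.Dual.lie_apply,
    hskew]
  ring

variable {H : g → g → g → ℝ}

theorem IsAlt3.apply_self (hH : IsAlt3 H) (x z : g) : H x x z = 0 :=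
  self_eq_neg.mp (hH.alt12 x x z)

theorem IsAlt3.rotate (hH : IsAlt3 H) (x y z : g) : H x y z = H z x y := by
  rw [hH.alt23, hH.alt12, neg_neg]

/-- The 3-form `H` regarded as the 2-cochain `(x, y) ↦ H(x, y, ·)` with values in the coadjoint
module. -/
noncomputable def IsAlt3.toTwoCochain (hH : IsAlt3 H) : twoCochain ℝ g (Module.Dual ℝ g) where
  val := LinearMap.mk₂ ℝ (dual3 H hH)
    (fun x x' y => LinearMap.ext fun z => (hH.lin1 y z).map_add x x')
    (fun r x y => LinearMap.ext fun z => (hH.lin1 y z).map_smul r x)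
    (fun x y y' => LinearMap.ext fun z => (hH.lin2 x z).map_add y y')
    (fun r x y => LinearMap.ext fun z => (hH.lin2 x z).map_smul r y)
  property x := LinearMap.ext fun z => hH.apply_self x z

theorem IsAlt3.toTwoCochain_apply (hH : IsAlt3 H) (x y z : g) : hH.toTwoCochain x y z = H x y z :=
  rfl

theorem dorf_eq_twistedBracket (hH : IsAlt3 H) : dorf H hH = twistedBracket hH.toTwoCochain := by
  funext u v
  rw [dorf, adStar_eq_lie, adStar_eq_lie]
  rfl

theorem IsAlt3.d₂₃_toTwoCochain_apply (hH : IsAlt3 H) (x y z t : g) :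
    d₂₃ ℝ g (Module.Dual ℝ g) hH.toTwoCochain x y z t = dThree lie H x y z t := by
  simp only [d₂₃_apply, LinearMap.add_apply, LinearMap.sub_apply, Module.Dual.lie_apply,
    hH.toTwoCochain_apply, dThree, lie, hH.rotate _ _ ⁅_, t⁆]
  ring

theorem IsAlt3.toTwoCochain_mem_twoCocycle_iff (hH : IsAlt3 H) :
    hH.toTwoCochain ∈ twoCocycle ℝ g (Module.Dual ℝ g) ↔
      ∀ x y z w : g, dThree lie H x y z w = 0 := by
  simp only [mem_twoCocycle_iff, LinearMap.ext_iff, LinearMap.zero_apply,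
    hH.d₂₃_toTwoCochain_apply]

end Coadjoint

end PqN

open PqN in
theorem twisted_dorfman_courant_iff_closed_general
    {g : Type*} [LieRing g] [LieAlgebra ℝ g]
    (H : g → g → g → ℝ) (hH : IsAlt3 H) :
    (∀ u : g × Module.Dual ℝ g, dorf H hH u u = 0) ∧
    (∀ u v w : g × Module.Dual ℝ g,
      pr (dorf H hH u v) w + pr v (dorf H hH u w) = 0) ∧
    ((∀ u v w : g × Module.Dual ℝ g,
        dorf H hH u (dorf H hH v w)
          = dorf H hH (dorf H hH u v) w + dorf H hH v (dorf H hH u w)) ↔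
      (∀ x y z w : g, dThree lie H x y z w = 0)) := by
  rw [dorf_eq_twistedBracket]
  refine ⟨twistedBracket_self _, fun u v w => ?_, ?_⟩
  · rw [pr_twistedBracket_add_pr_twistedBracket, hH.toTwoCochain_apply, hH.toTwoCochain_apply,
      hH.alt23, neg_add_cancel]
  · rw [twistedBracket_jacobi_iff_mem_twoCocycle, hH.toTwoCochain_mem_twoCocycle_iff]

open PqN in
/-- On `E = g ⊕ g*` with the `H`-twisted Dorfman bracket
`[(x,α),(y,β)]_H = ([x,y], ad*_x β − ad*_y α + H(x,y,·))` and the canonical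
pairing: (a) the bracket is alternating; (b) the pairing is invariant; and
(c) the bracket satisfies the Jacobi identity iff `dH = 0`. -/
theorem twisted_dorfman_courant_iff_closed
    {g : Type*} [LieRing g] [LieAlgebra ℝ g] [FiniteDimensional ℝ g]
    (H : g → g → g → ℝ) (hH : IsAlt3 H) :
    (∀ u : g × Module.Dual ℝ g, dorf H hH u u = 0) ∧
    (∀ u v w : g × Module.Dual ℝ g,
      pr (dorf H hH u v) w + pr v (dorf H hH u w) = 0) ∧
    ((∀ u v w : g × Module.Dual ℝ g,
        dorf H hH u (dorf H hH v w)
          = dorf H hH (dorf H hH u v) w + dorf H hH v (dorf H hH u w)) ↔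
      (∀ x y z w : g, dThree lie H x y z w = 0)) :=
  twisted_dorfman_courant_iff_closed_general H hH
end
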